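/- Let d ≥ 1, let D ⊆ ℝ^d be a bounded measurable set of Lebesgue measure m(D), and let σ : ℝ → ℝ satisfy |σ(x) − σ(y)| ≤ L₁|x − y| + L₂|x − y|·(log₊(max(|x|,|y|)))^{1/2} for all x, y ∈ ℝ, where L₁, L₂ > 0. Then for every pair of smooth functions u, v : ℝ^d → ℝ with compact support contained in D, every ε > 0 and every α ∈ (0,1): ∫_D |σ(u(x)) − σ(v(x))|² dx ≤ 2L₁²·‖u − v‖² + 2L₂²·[ ε ∫ |∇(u−v)(x)|² dx + (d/4)·log(1/ε)·‖u − v‖² + ‖u − v‖²·log‖u − v‖ + (1/(2(1−α)e))·(‖u‖^{2(1−α)} + ‖v‖^{2(1−α)})·‖u − v‖^{2α} + (1/(2(1−α)e))·(4 m(D))^{1−α}·‖u − v‖^{2α} ], where ‖·‖ denotes the L² norm and ‖u−v‖² log‖u−v‖ is interpreted as 0 when u = v. -/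

import Mathlib

open MeasureTheory

lemma ptwise_log (d : ℕ) (hd : 1 ≤ d) (g M c : ℝ) (G K : Fin d → ℝ) (hg : 0 < g) (hM : 0 < M)
    (hc : 0 < c) (hG : ∀ i, 0 < G i) (h : ∀ i, g ^ 2 ≤ 4 * G i * K i) :
    g * Real.log g ≤ g * Real.log M
      + d * ((g ^ (1 / d : ℝ) * ∏ i, (G i) ^ (1 / d : ℝ)) * M ^ (-(1 / d : ℝ)) - g)
      + 2 * c * (∑ i, g * K i / G i) - (d / 2 : ℝ) * (1 + Real.log c) * g := by
  have hd0 : (0 : ℝ) < d := by exact_mod_cast hd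
  have hK : ∀ i, 0 < K i := by
    intro i
    have h1 := h i
    have h2 : 0 < g ^ 2 := by positivity
    have h3 := hG i
    by_contra hk
    push Not at hk
    nlinarith
  have key : ∀ i, Real.log g ≤ Real.log (G i) + 2 * c * (K i / G i) - (1 / 2) * (1 + Real.log c) := by
    intro i
    have hGi := hG i
    have hKi := hK i
    have h1 : Real.log (g ^ 2) ≤ Real.log (4 * G i * K i) :=
      Real.log_le_log (by positivity) (h i)
    have h2 : 4 * G i * K i = (G i) ^ 2 * (4 * c * (K i / G i)) / c := by field_simp
    have h3 := Real.log_le_sub_one_of_pos (x := 4 * c * (K i / G i)) (by positivity)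
    rw [h2, Real.log_div (by positivity) (by positivity), Real.log_mul (by positivity) (by positivity),
      Real.log_pow, Real.log_pow] at h1
    push_cast at h1
    linarith
  have hsum : d * Real.log g ≤ (∑ i, Real.log (G i)) + 2 * c * (∑ i, K i / G i)
      - (d / 2 : ℝ) * (1 + Real.log c) := by
    have := Finset.sum_le_sum (s := Finset.univ) (fun i _ => key i)
    simp only [Finset.sum_sub_distrib, Finset.sum_add_distrib, Finset.sum_const, Finset.card_univ,
      Fintype.card_fin, nsmul_eq_mul, ← Finset.mul_sum] at this
    linarith
  set P := ∏ i, (G i) ^ (1 / d : ℝ) with hP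
  have hPpos : 0 < P := Finset.prod_pos fun i _ => Real.rpow_pos_of_pos (hG i) _
  have hlogP : Real.log P = (1 / d : ℝ) * ∑ i, Real.log (G i) := by
    rw [hP, Real.log_prod (fun i _ => (Real.rpow_pos_of_pos (hG i) _).ne'), Finset.mul_sum]
    exact Finset.sum_congr rfl fun i _ => Real.log_rpow (hG i) _
  have hT := Real.log_le_sub_one_of_pos
    (x := (g ^ (1 / d : ℝ) * P) * M ^ (-(1 / d : ℝ)) / g) (by positivity)
  rw [Real.log_div (by positivity) (by positivity), Real.log_mul (by positivity) (by positivity),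
    Real.log_mul (by positivity) (by positivity), Real.log_rpow hg, Real.log_rpow hM, hlogP] at hT
  have h5 : ∑ i, g * K i / G i = g * ∑ i, K i / G i := by
    rw [Finset.mul_sum]; exact Finset.sum_congr rfl fun i _ => by ring
  rw [h5]
  set T := (g ^ (1 / d : ℝ) * P) * M ^ (-(1 / d : ℝ))
  have h6 : Real.log g + (∑ i, Real.log (G i)) - Real.log M - d * Real.log g ≤ d * (T / g - 1) := by
    have := mul_le_mul_of_nonneg_left hT hd0.le
    have e : (d : ℝ) * (1 / ↑d * Real.log g + 1 / ↑d * ∑ i, Real.log (G i) + -(1 / ↑d) * Real.log M - Real.log g) = Real.log g + (∑ i, Real.log (G i)) - Real.log M - d * Real.log g := by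
      field_simp
      ring
    linarith
  have h7 : Real.log g ≤ Real.log M + d * (T / g - 1) + 2 * c * (∑ i, K i / G i)
      - (d / 2 : ℝ) * (1 + Real.log c) := by linarith
  have h8 := mul_le_mul_of_nonneg_left h7 hg.le
  have h9 : g * (T / g) = T := by field_simp
  calc _ ≤ _ := h8
    _ = _ := by linear_combination (d : ℝ) * h9

open ENNReal in
lemma oneD (h : ℝ → ℝ) (hh : ContDiff ℝ 1 h) (hs : HasCompactSupport h) (t : ℝ) :
    (‖h t‖ₑ ^ 2) ^ 2 ≤ 4 * (∫⁻ s, ‖h s‖ₑ ^ 2) * (∫⁻ s, ‖deriv h s‖ₑ ^ 2) := by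
  have h1 : ‖h t * h t‖ₑ ≤ ∫⁻ s, 2 * (‖h s‖ₑ * ‖deriv h s‖ₑ) := by
    calc ‖h t * h t‖ₑ ≤ ∫⁻ s in Set.Iic t, ‖deriv (fun s => h s * h s) s‖ₑ := by
          apply HasCompactSupport.enorm_le_lintegral_Ici_deriv (f := fun s => h s * h s)
          · exact hh.mul hh
          · exact hs.mul_left
      _ ≤ ∫⁻ s, ‖deriv (fun s => h s * h s) s‖ₑ := setLIntegral_le_lintegral _ _
      _ = _ := by
          congr with s
          have hd : HasDerivAt h (deriv h s) s := (hh.differentiable (by simp) s).hasDerivAt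
          have e : deriv (fun s => h s * h s) s = 2 * (h s * deriv h s) := by
            rw [(hd.fun_mul hd).deriv]; ring
          rw [e, enorm_mul, enorm_mul]
          congr 1
          rw [Real.enorm_eq_ofReal (by norm_num)]; simp
  have hm1 : Measurable fun s => ‖h s‖ₑ := hh.continuous.measurable.enorm
  have hm2 : Measurable fun s => ‖deriv h s‖ₑ := (measurable_deriv h).enorm
  rw [lintegral_const_mul' 2 _ (by simp)] at h1
  have h2 := ENNReal.lintegral_mul_le_Lp_mul_Lq volume Real.HolderConjugate.two_two
    hm1.aemeasurable hm2.aemeasurable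
  have h3 := h1.trans (mul_le_mul_right h2 2)
  have h4 := pow_le_pow_left₀ (by simp) h3 2
  rw [enorm_mul, ← sq] at h4
  refine h4.trans (le_of_eq ?_)
  rw [mul_pow, mul_pow, ← ENNReal.rpow_natCast (_ ^ (1 / (2 : ℝ))), ← ENNReal.rpow_natCast (_ ^ (1 / (2 : ℝ))),
    ← ENNReal.rpow_mul, ← ENNReal.rpow_mul]
  norm_num [mul_assoc]

lemma integrable_sq_cs {X : Type*} [TopologicalSpace X] [MeasurableSpace X] [OpensMeasurableSpace X]
    (μ : Measure X) [IsFiniteMeasureOnCompacts μ]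
    (F : X → ℝ) (hF : Continuous F) (hs : HasCompactSupport F) :
    Integrable (fun x => F x ^ 2) μ := by
  apply Continuous.integrable_of_hasCompactSupport (by fun_prop)
  exact hs.comp_left (g := fun y : ℝ => y ^ 2) (by simp)

lemma lintegral_sq_cs {X : Type*} [TopologicalSpace X] [MeasurableSpace X] [OpensMeasurableSpace X]
    (μ : Measure X) [IsFiniteMeasureOnCompacts μ]
    (F : X → ℝ) (hF : Continuous F) (hs : HasCompactSupport F) :
    ∫⁻ x, ‖F x‖ₑ ^ 2 ∂μ = ENNReal.ofReal (∫ x, F x ^ 2 ∂μ) := by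
  rw [ofReal_integral_eq_lintegral_ofReal (integrable_sq_cs μ F hF hs)
    (Filter.Eventually.of_forall fun x => by positivity)]
  congr with x
  rw [← enorm_pow, Real.enorm_eq_ofReal (by positivity)]

lemma line_finite (d : ℕ) (F : (Fin d → ℝ) → ℝ) (hF : Continuous F) (hs : HasCompactSupport F)
    (i : Fin d) (x : Fin d → ℝ) :
    (∫⋯∫⁻_{i}, (fun y => ‖F y‖ₑ ^ 2) ∂(fun _ => (volume : Measure ℝ))) x ≠ ⊤ := by
  rw [lmarginal_singleton]
  have h1 : Continuous fun t => F (Function.update x i t) :=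
    hF.comp (continuous_const.update i continuous_id)
  have h2 : HasCompactSupport fun t => F (Function.update x i t) :=
    hs.comp_isClosedEmbedding (isClosedEmbedding_update x i)
  have := lintegral_sq_cs volume _ h1 h2
  simp only [this]
  exact ENNReal.ofReal_ne_top

lemma toReal_enorm_sq (a : ℝ) : (‖a‖ₑ ^ 2).toReal = a ^ 2 := by
  rw [ENNReal.toReal_pow, toReal_enorm, Real.norm_eq_abs, sq_abs]

lemma deriv_cs (d : ℕ) (f : (Fin d → ℝ) → ℝ) (hs : HasCompactSupport f) (v : Fin d → ℝ) :
    HasCompactSupport fun x => fderiv ℝ f x v :=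
  hs.fderiv_apply ℝ v

lemma logSob_pi (d : ℕ) (hd : 1 ≤ d) (f : (Fin d → ℝ) → ℝ) (hf : ContDiff ℝ 1 f)
    (hs : HasCompactSupport f) (c : ℝ) (hc : 0 < c) :
    ∫ x, f x ^ 2 * Real.log (f x ^ 2) ≤
      (∫ x, f x ^ 2) * Real.log (∫ x, f x ^ 2)
      + 2 * c * (∑ i : Fin d, ∫ x, (fderiv ℝ f x (Pi.single i 1)) ^ 2)
      - (d / 2 : ℝ) * (1 + Real.log c) * (∫ x, f x ^ 2) := by
  classical
  have hd0 : (0 : ℝ) < d := by exact_mod_cast hd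
  have hfc := hf.continuous
  have hqc : ∀ i : Fin d, Continuous fun x => fderiv ℝ f x (Pi.single i 1) := fun i =>
    (hf.continuous_fderiv (by simp)).clm_apply continuous_const
  have hqs : ∀ i : Fin d, HasCompactSupport fun x => fderiv ℝ f x (Pi.single i 1) := fun i =>
    deriv_cs d f hs _
  have hMi := integrable_sq_cs volume f hfc hs
  have hMl := lintegral_sq_cs volume f hfc hs
  have hMnn : 0 ≤ ∫ x, f x ^ 2 := integral_nonneg fun x => by positivity
  have hqi := fun i => integrable_sq_cs volume _ (hqc i) (hqs i)
  have hql := fun i => lintegral_sq_cs volume _ (hqc i) (hqs i)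
  have hqnn : ∀ i : Fin d, 0 ≤ ∫ x, (fderiv ℝ f x (Pi.single i 1)) ^ 2 :=
    fun i => integral_nonneg fun x => by positivity
  set M := ∫ x, f x ^ 2 with hM
  rcases hMnn.eq_or_lt with hM0 | hMpos
  · have h0 : (fun x => f x ^ 2) =ᵐ[volume] 0 := by
      rw [← integral_eq_zero_iff_of_nonneg (fun x => by positivity) hMi]
      exact hM0.symm
    have h1 : ∫ x, f x ^ 2 * Real.log (f x ^ 2) = 0 := by
      apply integral_eq_zero_of_ae
      filter_upwards [h0] with x hx
      simp only [Pi.zero_apply] at hx ⊢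
      rw [hx, zero_mul]
    rw [h1, ← hM0]
    have := Finset.sum_nonneg (s := Finset.univ) (fun i _ => hqnn i)
    simp only [zero_mul, mul_zero, sub_zero, zero_add]
    positivity
  let gt : (Fin d → ℝ) → ENNReal := fun x => ‖f x‖ₑ ^ 2
  let qt : Fin d → (Fin d → ℝ) → ENNReal := fun i x => ‖fderiv ℝ f x (Pi.single i 1)‖ₑ ^ 2
  let Gt : Fin d → (Fin d → ℝ) → ENNReal := fun i => ∫⋯∫⁻_{i}, gt ∂(fun _ => (volume : Measure ℝ))
  let Kt : Fin d → (Fin d → ℝ) → ENNReal := fun i => ∫⋯∫⁻_{i}, (qt i) ∂(fun _ => (volume : Measure ℝ))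
  have hgm : Measurable gt := hfc.measurable.enorm.pow_const 2
  have hqm : ∀ i, Measurable (qt i) := fun i => (hqc i).measurable.enorm.pow_const 2
  have hGm : ∀ i, Measurable (Gt i) := fun i => hgm.lmarginal _
  have hKm : ∀ i, Measurable (Kt i) := fun i => (hqm i).lmarginal _
  have hGf : ∀ i x, Gt i x ≠ ⊤ := fun i x => line_finite d f hfc hs i x
  have hKf : ∀ i x, Kt i x ≠ ⊤ := fun i x => line_finite d _ (hqc i) (hqs i) i x
  have hgf : ∀ x, gt x ≠ ⊤ := fun x => by simp [gt]
  -- the product term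
  let Tt : (Fin d → ℝ) → ENNReal := fun x => gt x ^ (1 / d : ℝ) * ∏ i, Gt i x ^ (1 / d : ℝ)
  have hTm : Measurable Tt :=
    (hgm.pow_const _).mul (Finset.measurable_fun_prod _ fun i _ => (hGm i).pow_const _)
  have hTf : ∀ x, Tt x ≠ ⊤ := fun x => by
    refine ENNReal.mul_ne_top (ENNReal.rpow_ne_top_of_nonneg (by positivity) (hgf x)) ?_
    exact ENNReal.prod_ne_top fun i _ => ENNReal.rpow_ne_top_of_nonneg (by positivity) (hGf i x)
  have hTint : ∫⁻ x, Tt x ≤ ENNReal.ofReal (M ^ (1 + 1 / d : ℝ)) := by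
    have h := lintegral_mul_prod_lintegral_pow_le (fun _ : Fin d => (volume : Measure ℝ))
      (p := 1 / d) (by positivity) (by
        rw [Fintype.card_fin, mul_one_div, div_le_one hd0]; linarith) hgm
    have e : (1 - ((Fintype.card (Fin d) : ℝ) - 1) * (1 / d : ℝ)) = 1 / d := by
      rw [Fintype.card_fin]; field_simp; ring
    rw [e, ← volume_pi] at h
    rw [← ENNReal.ofReal_rpow_of_pos hMpos, ← hMl]
    refine le_trans (le_of_eq ?_) h
    simp only [Tt, Gt, lmarginal_singleton]
  have hTi : Integrable (fun x => (Tt x).toReal) volume :=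
    integrable_toReal_of_lintegral_ne_top hTm.aemeasurable
      (ne_top_of_le_ne_top ENNReal.ofReal_ne_top hTint)
  have hTr : ∫ x, (Tt x).toReal ≤ M ^ (1 + 1 / d : ℝ) := by
    rw [integral_toReal hTm.aemeasurable (Filter.Eventually.of_forall fun x => (hTf x).lt_top)]
    exact ENNReal.toReal_le_of_le_ofReal (by positivity) hTint
  -- the gradient terms
  let Wt : Fin d → (Fin d → ℝ) → ENNReal := fun i x => gt x * (Kt i x / Gt i x)
  have hWm : ∀ i, Measurable (Wt i) := fun i => hgm.mul ((hKm i).div (hGm i))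
  have hWint : ∀ i, ∫⁻ x, Wt i x ≤ ENNReal.ofReal (∫ x, (fderiv ℝ f x (Pi.single i 1)) ^ 2) := by
    intro i
    rw [← hql i]
    refine lintegral_le_of_lmarginal_le (μ := fun _ : Fin d => (volume : Measure ℝ)) {i}
      (hWm i) (hqm i) ?_
    intro x
    have e1 : ∀ t, Kt i (Function.update x i t) = Kt i x := fun t =>
      lmarginal_update_of_mem _ (Finset.mem_singleton_self i) _ _ _
    have e2 : ∀ t, Gt i (Function.update x i t) = Gt i x := fun t =>
      lmarginal_update_of_mem _ (Finset.mem_singleton_self i) _ _ _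
    have e3 : (∫⋯∫⁻_{i}, (Wt i) ∂(fun _ => (volume : Measure ℝ))) x = Gt i x * (Kt i x / Gt i x) := by
      rw [lmarginal_singleton]
      simp only [Wt, e1, e2]
      rw [lintegral_mul_const _ (by exact hgm.comp (measurable_update x))]
      congr 1
      simp only [Gt, lmarginal_singleton]
    rw [e3]
    exact ENNReal.mul_div_le
  have hWae : ∀ i, ∀ᵐ x, Wt i x < ⊤ := fun i => ae_lt_top (hWm i)
      (ne_top_of_le_ne_top ENNReal.ofReal_ne_top (hWint i))
  have hWi : ∀ i, Integrable (fun x => (Wt i x).toReal) volume := fun i =>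
    integrable_toReal_of_lintegral_ne_top (hWm i).aemeasurable
      (ne_top_of_le_ne_top ENNReal.ofReal_ne_top (hWint i))
  have hWr : ∀ i, ∫ x, (Wt i x).toReal ≤ ∫ x, (fderiv ℝ f x (Pi.single i 1)) ^ 2 := fun i => by
    rw [integral_toReal (hWm i).aemeasurable (hWae i)]
    exact ENNReal.toReal_le_of_le_ofReal (hqnn i) (hWint i)
  -- one-dimensional bound
  have hone : ∀ i x, gt x ^ 2 ≤ 4 * Gt i x * Kt i x := by
    intro i x
    have h1 : ContDiff ℝ 1 (fun t => f (Function.update x i t)) :=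
      hf.comp (contDiff_update 1 x i)
    have h2 : HasCompactSupport fun t => f (Function.update x i t) :=
      hs.comp_isClosedEmbedding (isClosedEmbedding_update x i)
    have h3 := oneD _ h1 h2 (x i)
    simp only [Function.update_eq_self] at h3
    refine h3.trans (le_of_eq ?_)
    simp only [Gt, Kt, lmarginal_singleton, gt, qt]
    congr 1
    refine lintegral_congr fun t => ?_
    congr 2
    have hd1 : HasFDerivAt f (fderiv ℝ f (Function.update x i t)) (Function.update x i t) :=
      (hf.differentiable (by simp) _).hasFDerivAt
    exact (hd1.comp_hasDerivAt t (hasDerivAt_update x i t)).deriv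
  -- pointwise bound
  have hpt : ∀ x, f x ^ 2 * Real.log (f x ^ 2) ≤ f x ^ 2 * Real.log M
      + d * ((Tt x).toReal * M ^ (-(1 / d : ℝ)) - f x ^ 2)
      + 2 * c * (∑ i, (Wt i x).toReal) - (d / 2 : ℝ) * (1 + Real.log c) * f x ^ 2 := by
    intro x
    by_cases hx : f x = 0
    · have : 0 ≤ ∑ i, (Wt i x).toReal := Finset.sum_nonneg fun i _ => ENNReal.toReal_nonneg
      simp only [hx, ne_eq, OfNat.ofNat_ne_zero, not_false_eq_true, zero_pow, zero_mul, mul_zero,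
        sub_zero, zero_add]
      positivity
    · have hg : 0 < f x ^ 2 := by positivity
      have hreal : ∀ i, (f x ^ 2) ^ 2 ≤ 4 * (Gt i x).toReal * (Kt i x).toReal := by
        intro i
        have := ENNReal.toReal_mono (ENNReal.mul_ne_top
          (ENNReal.mul_ne_top (by simp) (hGf i x)) (hKf i x)) (hone i x)
        simpa [gt, ENNReal.toReal_mul, ENNReal.toReal_pow] using this
      have hGpos : ∀ i, 0 < (Gt i x).toReal := by
        intro i
        have h1 := hreal i
        have h2 : 0 < (f x ^ 2) ^ 2 := by positivity
        rcases (ENNReal.toReal_nonneg (a := Gt i x)).eq_or_lt with h | h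
        · rw [← h] at h1; simp at h1; exact absurd h1 hx
        · exact h
      have h := ptwise_log d hd (f x ^ 2) M c _ _ hg hMpos hc hGpos hreal
      refine h.trans (le_of_eq ?_)
      have e1 : (Tt x).toReal = (f x ^ 2) ^ (1 / d : ℝ) * ∏ i, (Gt i x).toReal ^ (1 / d : ℝ) := by
        simp only [Tt, ENNReal.toReal_mul, ENNReal.toReal_prod, ← ENNReal.toReal_rpow, gt,
          toReal_enorm_sq]
      have e2 : ∀ i, (Wt i x).toReal = f x ^ 2 * (Kt i x).toReal / (Gt i x).toReal := by
        intro i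
        simp only [Wt, ENNReal.toReal_mul, ENNReal.toReal_div, gt, toReal_enorm_sq, mul_div_assoc]
      rw [e1]
      simp only [e2]
  have hLi : Integrable (fun x => f x ^ 2 * Real.log (f x ^ 2)) volume := by
    apply Continuous.integrable_of_hasCompactSupport
    · exact Real.continuous_mul_log.comp (hfc.pow 2)
    · exact hs.comp_left (g := fun y : ℝ => y ^ 2 * Real.log (y ^ 2)) (by simp)
  have hWsi : Integrable (fun x => ∑ i, (Wt i x).toReal) volume :=
    integrable_finsetSum _ fun i _ => hWi i
  have i1 := hMi.mul_const (Real.log M)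
  have i2 := ((hTi.mul_const (M ^ (-(1 / d : ℝ)))).sub hMi).const_mul (d : ℝ)
  have i3 := hWsi.const_mul (2 * c)
  have i4 := hMi.const_mul ((d / 2 : ℝ) * (1 + Real.log c))
  have hfin := integral_mono hLi (((i1.add i2).add i3).sub i4) hpt
  refine hfin.trans ?_
  rw [integral_sub' ((i1.add i2).add i3) i4, integral_add' (i1.add i2) i3, integral_add' i1 i2]
  simp only [integral_const_mul, integral_mul_const]
  rw [integral_sub' (hTi.mul_const _) hMi, integral_finsetSum _ (fun i _ => hWi i), integral_mul_const,
    ← hM]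
  have b1 : (∫ x, (Tt x).toReal) * M ^ (-(1 / d : ℝ)) ≤ M := by
    calc _ ≤ M ^ (1 + 1 / d : ℝ) * M ^ (-(1 / d : ℝ)) := by gcongr
      _ = M := by rw [← Real.rpow_add hMpos]; simp
  have b2 : (∑ i, ∫ x, (Wt i x).toReal) ≤ ∑ i : Fin d, ∫ x, (fderiv ℝ f x (Pi.single i 1)) ^ 2 :=
    Finset.sum_le_sum fun i _ => hWr i
  have b3 := mul_le_mul_of_nonneg_left b2 (by positivity : 0 ≤ 2 * c)
  have b4 := mul_le_mul_of_nonneg_left (sub_nonpos.2 b1) hd0.le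
  linarith

lemma sum_sq_le_dual (d : ℕ) (L : EuclideanSpace ℝ (Fin d) →L[ℝ] ℝ) :
    ∑ i, (L (EuclideanSpace.single i 1)) ^ 2 ≤ ‖L‖ ^ 2 := by
  set y : EuclideanSpace ℝ (Fin d) := WithLp.toLp 2 (fun i => L (EuclideanSpace.single i 1)) with hy
  have h1 : ‖y‖ ^ 2 = ∑ i, (L (EuclideanSpace.single i 1)) ^ 2 := by
    rw [EuclideanSpace.real_norm_sq_eq]
  have h2 : L y = ‖y‖ ^ 2 := by
    have e : y = ∑ i, (L (EuclideanSpace.single i 1)) • EuclideanSpace.single i (1 : ℝ) := by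
      ext j
      simp [hy, Finset.sum_apply, Pi.single_apply]
    rw [h1]
    conv_lhs => rw [e]
    simp [sq]
  rw [← h1]
  have h3 : ‖y‖ ^ 2 ≤ ‖L‖ * ‖y‖ := by
    rw [← h2]; exact (le_abs_self _).trans (L.le_opNorm y)
  rcases (norm_nonneg y).eq_or_lt with h | h
  · rw [← h, zero_pow two_ne_zero]; positivity
  · have : ‖y‖ ≤ ‖L‖ := by
      by_contra hc
      push Not at hc
      nlinarith
    gcongr

lemma logSob (d : ℕ) (hd : 1 ≤ d) (w : EuclideanSpace ℝ (Fin d) → ℝ) (hw : ContDiff ℝ 1 w)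
    (hs : HasCompactSupport w) (c : ℝ) (hc : 0 < c) :
    ∫ x, w x ^ 2 * Real.log (w x ^ 2) ≤
      (∫ x, w x ^ 2) * Real.log (∫ x, w x ^ 2)
      + 2 * c * (∫ x, ‖fderiv ℝ w x‖ ^ 2)
      - (d / 2 : ℝ) * (1 + Real.log c) * (∫ x, w x ^ 2) := by
  let e := (EuclideanSpace.equiv (Fin d) ℝ).symm
  have hmp : MeasurePreserving (fun x : Fin d → ℝ => e x) := PiLp.volume_preserving_toLp (Fin d)
  have hemb : MeasurableEmbedding (fun x : Fin d → ℝ => e x) :=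
    (MeasurableEquiv.toLp 2 (Fin d → ℝ)).measurableEmbedding
  have htr : ∀ F : EuclideanSpace ℝ (Fin d) → ℝ, ∫ x, F (e x) = ∫ x, F x := fun F =>
    hmp.integral_comp hemb F
  have h := logSob_pi d hd (fun x => w (e x)) (hw.comp e.contDiff)
    (hs.comp_homeomorph e.toHomeomorph) c hc
  rw [htr (fun x => w x ^ 2 * Real.log (w x ^ 2)), htr (fun x => w x ^ 2)] at h
  have hfd : ∀ (i : Fin d) (x : Fin d → ℝ), fderiv ℝ (fun x => w (e x)) x (Pi.single i 1)
      = fderiv ℝ w (e x) (EuclideanSpace.single i 1) := by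
    intro i x
    have h1 : HasFDerivAt (fun x => w (e x)) ((fderiv ℝ w (e x)).comp (e : (Fin d → ℝ) →L[ℝ] EuclideanSpace ℝ (Fin d))) x :=
      ((hw.differentiable (by simp) _).hasFDerivAt).comp x e.hasFDerivAt
    rw [h1.fderiv]
    rfl
  simp only [hfd] at h
  have hsum : ∑ i : Fin d, ∫ x, (fderiv ℝ w (e x) (EuclideanSpace.single i 1)) ^ 2
      ≤ ∫ x, ‖fderiv ℝ w x‖ ^ 2 := by
    have hci : ∀ i : Fin d, Integrable (fun x => (fderiv ℝ w x (EuclideanSpace.single i 1)) ^ 2) volume :=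
      fun i => integrable_sq_cs volume _ ((hw.continuous_fderiv (by simp)).clm_apply continuous_const)
        (hs.fderiv_apply ℝ _)
    have e1 : ∀ i : Fin d, ∫ x, (fderiv ℝ w (e x) (EuclideanSpace.single i 1)) ^ 2
        = ∫ x, (fderiv ℝ w x (EuclideanSpace.single i 1)) ^ 2 := fun i =>
      htr (fun x => (fderiv ℝ w x (EuclideanSpace.single i 1)) ^ 2)
    simp only [e1]
    rw [← integral_finsetSum _ (fun i _ => hci i)]
    refine integral_mono (integrable_finsetSum _ (fun i _ => hci i)) ?_
      (fun x => sum_sq_le_dual d _)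
    exact integrable_sq_cs volume _ (hw.continuous_fderiv (by simp)).norm (hs.fderiv ℝ).norm
  have := mul_le_mul_of_nonneg_left hsum (by positivity : 0 ≤ 2 * c)
  linarith

lemma holder_aux {X : Type*} [MeasurableSpace X] (μ : Measure X) (F H : X → ℝ)
    (hF : Integrable F μ) (hH : Integrable H μ) (hF0 : ∀ x, 0 ≤ F x) (hH0 : ∀ x, 0 ≤ H x)
    (α : ℝ) (hα0 : 0 < α) (hα1 : α < 1) :
    Integrable (fun x => F x ^ α * H x ^ (1 - α)) μ ∧
    ∫ x, F x ^ α * H x ^ (1 - α) ∂μ ≤ (∫ x, F x ∂μ) ^ α * (∫ x, H x ∂μ) ^ (1 - α) := by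
  have hb : 0 < 1 - α := by linarith
  constructor
  · refine ((hF.const_mul α).add (hH.const_mul (1 - α))).mono' ?_ ?_
    · exact ((hF.1.aemeasurable.pow_const α).mul (hH.1.aemeasurable.pow_const _)).aestronglyMeasurable
    · refine Filter.Eventually.of_forall fun x => ?_
      have h1 := hF0 x
      have h2 := hH0 x
      rw [Real.norm_of_nonneg (by positivity)]
      exact Real.geom_mean_le_arith_mean2_weighted hα0.le hb.le h1 h2 (by ring)
  · have key : ∀ (K : X → ℝ) (b : ℝ), Integrable K μ → (∀ x, 0 ≤ K x) → 0 < b →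
        MemLp (fun x => K x ^ b) (ENNReal.ofReal (1 / b)) μ := by
      intro K b hK hK0 hb
      have := (memLp_one_iff_integrable.2 hK).norm_rpow_div (ENNReal.ofReal b)
      rw [ENNReal.toReal_ofReal hb.le] at this
      rw [ENNReal.ofReal_div_of_pos hb, ENNReal.ofReal_one]
      refine this.congr_norm ?_ ?_
      · exact (hK.1.aemeasurable.pow_const b).aestronglyMeasurable
      · refine Filter.Eventually.of_forall fun x => ?_
        rw [Real.norm_of_nonneg (hK0 x)]
    have hpq : (1 / α).HolderConjugate (1 / (1 - α)) := by
      rw [Real.holderConjugate_iff]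
      constructor
      · rw [lt_div_iff₀ hα0]; linarith
      · simp
    have h := integral_mul_le_Lp_mul_Lq_of_nonneg (μ := μ) hpq
      (f := fun x => F x ^ α) (g := fun x => H x ^ (1 - α))
      (Filter.Eventually.of_forall fun x => Real.rpow_nonneg (hF0 x) _)
      (Filter.Eventually.of_forall fun x => Real.rpow_nonneg (hH0 x) _)
      (key F α hF hF0 hα0) (key H (1 - α) hH hH0 hb)
    have e : ∀ (y b : ℝ), 0 ≤ y → 0 < b → (y ^ b) ^ (1 / b) = y := by
      intro y b hy hb
      rw [← Real.rpow_mul hy, mul_one_div_cancel hb.ne', Real.rpow_one]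
    simp only [e _ _ (hF0 _) hα0, e _ _ (hH0 _) hb, one_div_one_div] at h
    exact h

lemma ptwise_main (a b α : ℝ) (hα1 : α < 1) :
    (a - b) ^ 2 * Real.log (max 1 (max |a| |b|)) ≤
      (1 / 2) * ((a - b) ^ 2 * Real.log ((a - b) ^ 2))
      + (1 / (2 * (1 - α) * Real.exp 1)) *
        (((a - b) ^ 2) ^ α * (a ^ 2) ^ (1 - α) + ((a - b) ^ 2) ^ α * (b ^ 2) ^ (1 - α)
          + ((a - b) ^ 2) ^ α * (1 : ℝ) ^ (1 - α)) := by
  have hb : 0 < 1 - α := by linarith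
  have he := Real.exp_pos 1
  by_cases hw : a - b = 0
  · rw [hw]
    simp only [ne_eq, OfNat.ofNat_ne_zero, not_false_eq_true, zero_pow, zero_mul, mul_zero, zero_add]
    positivity
  set m := max 1 (max |a| |b|) with hm
  have hm1 : 1 ≤ m := le_max_left _ _
  have hm0 : 0 < m := by linarith
  set W := (a - b) ^ 2 with hW
  have hW0 : 0 < W := by positivity
  have hmm : (m ^ 2) ^ (1 - α) ≤ (a ^ 2) ^ (1 - α) + (b ^ 2) ^ (1 - α) + (1 : ℝ) ^ (1 - α) := by
    have p1 : 0 ≤ (a ^ 2) ^ (1 - α) := by positivity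
    have p2 : 0 ≤ (b ^ 2) ^ (1 - α) := by positivity
    have p3 : 0 ≤ (1 : ℝ) ^ (1 - α) := by positivity
    have : m = 1 ∨ m = |a| ∨ m = |b| := by grind
    rcases this with h | h | h
    · rw [h, one_pow]; linarith
    · rw [h, sq_abs]; linarith
    · rw [h, sq_abs]; linarith
  set y := (m ^ 2 / W) ^ (1 - α) with hy
  have hy0 : 0 < y := by positivity
  have h1 : Real.log y = (1 - α) * (2 * Real.log m - Real.log W) := by
    rw [hy, Real.log_rpow (by positivity), Real.log_div (by positivity) (by positivity), Real.log_pow]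
    push_cast; ring
  have h2 : Real.log y ≤ y / Real.exp 1 := by
    have := Real.log_le_sub_one_of_pos (x := y / Real.exp 1) (by positivity)
    rw [Real.log_div hy0.ne' he.ne', Real.log_exp] at this
    linarith
  have h3 : W * y = W ^ α * (m ^ 2) ^ (1 - α) := by
    rw [hy, Real.div_rpow (by positivity) hW0.le]
    have : W = W ^ α * W ^ (1 - α) := by rw [← Real.rpow_add hW0]; simp
    have p : 0 < W ^ (1 - α) := by positivity
    field_simp
    rw [mul_comm (W ^ (1 - α)), ← this]
  have h4 : Real.log m ≤ (1 / 2) * Real.log W + (1 / (2 * (1 - α) * Real.exp 1)) * y := by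
    rw [h1] at h2
    have : 2 * Real.log m - Real.log W ≤ y / Real.exp 1 / (1 - α) := by
      rw [le_div_iff₀ hb]; linarith
    have e : (1 / (2 * (1 - α) * Real.exp 1)) * y = (1 / 2) * (y / Real.exp 1 / (1 - α)) := by
      field_simp
    rw [e]; linarith
  have h5 := mul_le_mul_of_nonneg_left h4 hW0.le
  have h6 : W ^ α * (m ^ 2) ^ (1 - α) ≤ W ^ α * ((a ^ 2) ^ (1 - α) + (b ^ 2) ^ (1 - α) + (1 : ℝ) ^ (1 - α)) := by
    gcongr
  have h7 := mul_le_mul_of_nonneg_left h6 (by positivity : 0 ≤ 1 / (2 * (1 - α) * Real.exp 1))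
  rw [← h3] at h7
  linarith

/-- If `|σ(x) − σ(y)| ≤ L₁|x−y| + L₂|x−y|(log₊ max(|x|,|y|))^{1/2}`, then for smooth `u, v`
compactly supported in a bounded measurable set `D`, `ε > 0`, `α ∈ (0,1)`:
`∫_D |σ(u) − σ(v)|² ≤ 2L₁² ‖u−v‖² + 2L₂² [ε ‖∇(u−v)‖² + (d/4) log(1/ε) ‖u−v‖²
  + ‖u−v‖² log‖u−v‖ + (1/(2(1−α)e))(‖u‖^{2(1−α)} + ‖v‖^{2(1−α)})‖u−v‖^{2α}
  + (1/(2(1−α)e))(4m(D))^{1−α}‖u−v‖^{2α}]`. -/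
theorem sigma_difference_square_bound
    (d : ℕ) (hd : 1 ≤ d)
    (D : Set (EuclideanSpace ℝ (Fin d)))
    (hDmeas : MeasurableSet D) (hDbdd : Bornology.IsBounded D)
    (σ : ℝ → ℝ) (L₁ L₂ : ℝ) (hL₁ : 0 < L₁) (hL₂ : 0 < L₂)
    (hσ : ∀ x y : ℝ, |σ x - σ y| ≤ L₁ * |x - y|
      + L₂ * |x - y| * Real.sqrt (Real.log (max 1 (max |x| |y|))))
    (u v : EuclideanSpace ℝ (Fin d) → ℝ)
    (hu : ContDiff ℝ (⊤ : ℕ∞) u) (husupp : HasCompactSupport u) (husuppD : tsupport u ⊆ D)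
    (hv : ContDiff ℝ (⊤ : ℕ∞) v) (hvsupp : HasCompactSupport v) (hvsuppD : tsupport v ⊆ D)
    (ε : ℝ) (hε : 0 < ε) (α : ℝ) (hα0 : 0 < α) (hα1 : α < 1) :
    (∫ x in D, (σ (u x) - σ (v x)) ^ 2) ≤
      2 * L₁ ^ 2 * (∫ x, (u x - v x) ^ 2)
        + 2 * L₂ ^ 2 *
          (ε * (∫ x, ‖fderiv ℝ (fun y => u y - v y) x‖ ^ 2)
            + (d / 4 : ℝ) * Real.log (1 / ε) * (∫ x, (u x - v x) ^ 2)
            + (∫ x, (u x - v x) ^ 2) * Real.log (Real.sqrt (∫ x, (u x - v x) ^ 2))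
            + (1 / (2 * (1 - α) * Real.exp 1)) *
                ((∫ x, u x ^ 2) ^ (1 - α) + (∫ x, v x ^ 2) ^ (1 - α)) *
                (∫ x, (u x - v x) ^ 2) ^ α
            + (1 / (2 * (1 - α) * Real.exp 1)) * (4 * (volume D).toReal) ^ (1 - α) *
                (∫ x, (u x - v x) ^ 2) ^ α) := by
  have hb : 0 < 1 - α := by linarith
  have hw : ContDiff ℝ 1 (fun x => u x - v x) := (hu.sub hv).of_le (by exact_mod_cast le_top)
  have hws : HasCompactSupport (fun x => u x - v x) := husupp.sub hvsupp
  have hu0 : ∀ x, x ∉ D → u x = 0 := fun x hx => image_eq_zero_of_notMem_tsupport fun h => hx (husuppD h)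
  have hv0 : ∀ x, x ∉ D → v x = 0 := fun x hx => image_eq_zero_of_notMem_tsupport fun h => hx (hvsuppD h)
  have hLS := logSob d hd _ hw hws ε hε
  have hwi := integrable_sq_cs volume _ hw.continuous hws
  have hui := integrable_sq_cs volume _ hu.continuous husupp
  have hvi := integrable_sq_cs volume _ hv.continuous hvsupp
  have hDfin : volume D ≠ ⊤ := hDbdd.measure_lt_top.ne
  have h1i : Integrable (fun _ : EuclideanSpace ℝ (Fin d) => (1 : ℝ)) (volume.restrict D) :=
    integrableOn_const hDfin
  have hli : Integrable (fun x => (u x - v x) ^ 2 * Real.log ((u x - v x) ^ 2)) volume := by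
    apply Continuous.integrable_of_hasCompactSupport
    · exact Real.continuous_mul_log.comp (hw.continuous.pow 2)
    · exact hws.comp_left (g := fun y : ℝ => y ^ 2 * Real.log (y ^ 2)) (by simp)
  obtain ⟨iu, bu⟩ := holder_aux (volume.restrict D) _ _ hwi.restrict hui.restrict
    (fun x => by positivity) (fun x => by positivity) α hα0 hα1
  obtain ⟨iv, bv⟩ := holder_aux (volume.restrict D) _ _ hwi.restrict hvi.restrict
    (fun x => by positivity) (fun x => by positivity) α hα0 hα1
  obtain ⟨i1, b1⟩ := holder_aux (volume.restrict D) _ _ hwi.restrict h1i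
    (fun x => by positivity) (fun x => by positivity) α hα0 hα1
  have ew : ∫ x in D, (u x - v x) ^ 2 = ∫ x, (u x - v x) ^ 2 :=
    setIntegral_eq_integral_of_forall_compl_eq_zero fun x hx => by simp [hu0 x hx, hv0 x hx]
  have eu : ∫ x in D, (u x) ^ 2 = ∫ x, (u x) ^ 2 :=
    setIntegral_eq_integral_of_forall_compl_eq_zero fun x hx => by simp [hu0 x hx]
  have ev : ∫ x in D, (v x) ^ 2 = ∫ x, (v x) ^ 2 :=
    setIntegral_eq_integral_of_forall_compl_eq_zero fun x hx => by simp [hv0 x hx]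
  have el : ∫ x in D, (u x - v x) ^ 2 * Real.log ((u x - v x) ^ 2)
      = ∫ x, (u x - v x) ^ 2 * Real.log ((u x - v x) ^ 2) :=
    setIntegral_eq_integral_of_forall_compl_eq_zero fun x hx => by simp [hu0 x hx, hv0 x hx]
  have e1 : ∫ x in D, (1 : ℝ) = (volume D).toReal := by simp [Measure.real]
  rw [ew, eu] at bu
  rw [ew, ev] at bv
  rw [ew, e1] at b1
  have hMnn : 0 ≤ ∫ x, (u x - v x) ^ 2 := integral_nonneg fun x => by positivity
  set κ := 1 / (2 * (1 - α) * Real.exp 1) with hκ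
  have hκ0 : 0 ≤ κ := by positivity
  have hpt : ∀ x, (σ (u x) - σ (v x)) ^ 2 ≤ 2 * L₁ ^ 2 * (u x - v x) ^ 2
      + 2 * L₂ ^ 2 * ((1 / 2) * ((u x - v x) ^ 2 * Real.log ((u x - v x) ^ 2))
        + κ * (((u x - v x) ^ 2) ^ α * (u x ^ 2) ^ (1 - α)
          + ((u x - v x) ^ 2) ^ α * (v x ^ 2) ^ (1 - α)
          + ((u x - v x) ^ 2) ^ α * (1 : ℝ) ^ (1 - α))) := by
    intro x
    have hlog : 0 ≤ Real.log (max 1 (max |u x| |v x|)) := Real.log_nonneg (le_max_left _ _)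
    have h1 := hσ (u x) (v x)
    have h2 : (σ (u x) - σ (v x)) ^ 2 ≤ (L₁ * |u x - v x|
      + L₂ * |u x - v x| * Real.sqrt (Real.log (max 1 (max |u x| |v x|)))) ^ 2 := by
      rw [← sq_abs]; gcongr
    have h3 := add_sq_le (a := L₁ * |u x - v x|)
      (b := L₂ * |u x - v x| * Real.sqrt (Real.log (max 1 (max |u x| |v x|))))
    rw [mul_pow, mul_pow, mul_pow, Real.sq_sqrt hlog, sq_abs] at h3
    have h4 := mul_le_mul_of_nonneg_left (ptwise_main (u x) (v x) α hα1)
      (by positivity : 0 ≤ 2 * L₂ ^ 2)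
    linarith
  have j1 := hwi.restrict (s := D) |>.const_mul (2 * L₁ ^ 2)
  have j2 := hli.restrict (s := D) |>.const_mul (1 / 2)
  have j3 := ((iu.add iv).add i1).const_mul κ
  have hfin := integral_mono_of_nonneg (μ := volume.restrict D)
    (Filter.Eventually.of_forall fun x => sq_nonneg _)
    (j1.add ((j2.add j3).const_mul (2 * L₂ ^ 2))) (Filter.Eventually.of_forall hpt)
  refine hfin.trans ?_
  rw [integral_add' j1 ((j2.add j3).const_mul (2 * L₂ ^ 2)), integral_const_mul, integral_const_mul,
    integral_add' j2 j3, integral_const_mul, integral_const_mul, integral_add' (iu.add iv) i1,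
    integral_add' iu iv, ew, el]
  set M := ∫ x, (u x - v x) ^ 2 with hM
  have b1' : M ^ α * (volume D).toReal ^ (1 - α) ≤ (4 * (volume D).toReal) ^ (1 - α) * M ^ α := by
    rw [mul_comm]
    have : 0 ≤ (volume D).toReal := ENNReal.toReal_nonneg
    gcongr
    linarith
  rw [Real.log_sqrt hMnn, one_div ε, Real.log_inv]
  have c1 := mul_le_mul_of_nonneg_left (add_le_add (add_le_add bu bv) (b1.trans b1')) hκ0
  gcongr _ + 2 * L₂ ^ 2 * ?_
  have c2 : 0 ≤ (d : ℝ) * M := by positivity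
  linarith
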